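/- Exhaustive blocked clause elimination is not symmetry-lifting: there exist CNF formulas F and F' such that F' is obtained from F by exhaustively removing blocked clauses and some semantic symmetry of F', extended by the identity on Lit(F) ∖ Lit(F'), is not a semantic symmetry of F (witnessed by F = (x∨z)∧(ȳ∨z)∧(ȳ∨z̄)∧(y∨a)∧(y∨b)∧(ā∨b̄∨c̄)∧(c∨ȳ), where after eliminating the clauses containing the pure literal x the transposition exchanging z and z̄ is a syntactic and hence semantic symmetry of F', but is not a semantic symmetry of F). -/

import Mathlib

/-- A literal over a variable type `V`: a variable or its negation. -/
inductive Lit (V : Type) where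
  | pos : V → Lit V
  | neg : V → Lit V
deriving DecidableEq

variable {V : Type} [DecidableEq V]

/-- Negation of a literal (so that double negation is the identity). -/
def Lit.negate : Lit V → Lit V
  | .pos v => .neg v
  | .neg v => .pos v

/-- The underlying variable of a literal. -/
def Lit.var : Lit V → V
  | .pos v => v
  | .neg v => v

/-- A clause is a finite set of literals. -/
abbrev Clause (V : Type) := Finset (Lit V)

/-- A CNF formula is a finite set of clauses. -/
abbrev CNF (V : Type) := Finset (Clause V)

/-- `Var(F)`: the variables occurring in a formula. -/
def CNF.vars (F : CNF V) : Finset V := Finset.sup F (fun C => Finset.image Lit.var C)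

/-- `Lit(F) = Var(F) ∪ {v̄ : v ∈ Var(F)}`. -/
def CNF.lits (F : CNF V) : Finset (Lit V) :=
  Finset.image Lit.pos (CNF.vars F) ∪ Finset.image Lit.neg (CNF.vars F)

/-- The value of a literal under a complete assignment (given on the variables,
which determines a consistent complete assignment on all literals). -/
def Lit.val (σ : V → Bool) : Lit V → Bool
  | .pos v => σ v
  | .neg v => !(σ v)

/-- `C[σ]`: delete from `C` every literal mapped to `⊥` by `σ`
(i.e. keep `l` with `¬l ∉ σ`). -/
def Clause.reduce (σ : V → Bool) (C : Clause V) : Clause V :=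
  Finset.filter (fun l => Lit.val σ (Lit.negate l) = false) C

/-- `F[σ]`: delete every clause containing a literal mapped to `⊤` by `σ`
(for a complete assignment: every clause containing no false literal is kept)
and delete from each remaining clause every literal mapped to `⊥`. -/
def CNF.reduce (F : CNF V) (σ : V → Bool) : CNF V :=
  Finset.image (Clause.reduce σ) (Finset.filter (fun C => ∀ l ∈ C, Lit.val σ l = false) F)

/-- Apply a map on literals elementwise to clauses and formulas. -/
def CNF.map (φ : Lit V → Lit V) (F : CNF V) : CNF V :=
  Finset.image (fun C => Finset.image φ C) F

/-- `φ` is a syntactic symmetry of `F`: a bijection of `Lit(F)` respecting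
negation with `φ(F) = F`. -/
def IsSynSym (F : CNF V) (φ : Lit V → Lit V) : Prop :=
  Set.BijOn φ (CNF.lits F : Set (Lit V)) (CNF.lits F : Set (Lit V)) ∧
  (∀ l ∈ CNF.lits F, φ (Lit.negate l) = Lit.negate (φ l)) ∧
  CNF.map φ F = F

/-- `φ` is a semantic symmetry of `F`: a bijection of `Lit(F)` respecting
negation with `F[σ] = φ(F)[σ]` for every complete assignment `σ`. -/
def IsSemSym (F : CNF V) (φ : Lit V → Lit V) : Prop :=
  Set.BijOn φ (CNF.lits F : Set (Lit V)) (CNF.lits F : Set (Lit V)) ∧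
  (∀ l ∈ CNF.lits F, φ (Lit.negate l) = Lit.negate (φ l)) ∧
  ∀ σ : V → Bool, CNF.reduce F σ = CNF.reduce (CNF.map φ F) σ

/-- Extend a map defined on the literal set `S` by the identity outside `S`. -/
def extendId (S : Finset (Lit V)) (φ : Lit V → Lit V) : Lit V → Lit V :=
  fun l => if l ∈ S then φ l else l

/-- `F[l ↦ ⊤]`: delete every clause containing `l` and delete `l̄` from every
remaining clause. -/
def CNF.assignTrue (F : CNF V) (l : Lit V) : CNF V :=
  Finset.image (fun C => Finset.erase C (Lit.negate l)) (Finset.filter (fun C => l ∉ C) F)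

/-- A clause is a tautology if it contains some literal with its negation. -/
def IsTaut (C : Clause V) : Prop := ∃ l ∈ C, Lit.negate l ∈ C

/-- `l ∈ C` blocks `C` in `F`: every resolvent of `C` on `l` with a clause of
`F` containing `l̄` is a tautology. -/
def Blocks (F : CNF V) (l : Lit V) (C : Clause V) : Prop :=
  l ∈ C ∧ ∀ C' ∈ F, Lit.negate l ∈ C' → IsTaut (C.erase l ∪ C'.erase (Lit.negate l))

/-- One application of blocked clause elimination: remove a blocked clause. -/
def BCEStep (F F' : CNF V) : Prop :=
  ∃ C ∈ F, (∃ l : Lit V, Blocks F l C) ∧ F' = F.erase C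

/-!
If the variable of `x` does not occur in `F'`, the clause `{x, z}` is blocked by `x` in
`F' ∪ {{x, z}}`, so blocked clause elimination may return to `F'`. Yet the clause forces `z` as soon
as `x` is false: a model of `F'` with `x` false and `z` true is a model of `F' ∪ {{x, z}}`, but not
of its image under a symmetry sending `z` to a literal that is false there. It remains to exhibit a
satisfiable formula without blocked clauses that is invariant under exchanging `z` and `z̄`.
-/

theorem Lit.negate_negate {α : Type} (l : Lit α) : l.negate.negate = l := by
  cases l <;> rfl

theorem Lit.var_negate {α : Type} (l : Lit α) : l.negate.var = l.var := by
  cases l <;> rfl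

theorem CNF.mem_vars {F : CNF V} {v : V} : v ∈ F.vars ↔ ∃ C ∈ F, ∃ l ∈ C, l.var = v := by
  simp [CNF.vars, Finset.mem_sup]

theorem CNF.mem_lits {F : CNF V} {l : Lit V} : l ∈ F.lits ↔ l.var ∈ F.vars := by
  cases l <;> simp [CNF.lits, Lit.var]

/-- The assignment `σ` is a model of `F`: it makes some literal of every clause true. Semantic
symmetries are tested on models, since `F[σ] = ∅` exactly when `σ` is a model of `F`. -/
def CNF.IsModel (F : CNF V) (σ : V → Bool) : Prop :=
  ∀ C ∈ F, ∃ l ∈ C, l.val σ = true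

theorem CNF.reduce_eq_empty_iff {F : CNF V} {σ : V → Bool} : F.reduce σ = ∅ ↔ F.IsModel σ := by
  simp [CNF.reduce, CNF.IsModel, Finset.filter_eq_empty_iff]

theorem IsSemSym.isModel_map_iff {F : CNF V} {φ : Lit V → Lit V} (hφ : IsSemSym F φ)
    {σ : V → Bool} : (F.map φ).IsModel σ ↔ F.IsModel σ := by
  rw [← CNF.reduce_eq_empty_iff, ← CNF.reduce_eq_empty_iff, hφ.2.2 σ]

theorem IsSynSym.isSemSym {F : CNF V} {φ : Lit V → Lit V} (hφ : IsSynSym F φ) :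
    IsSemSym F φ :=
  ⟨hφ.1, hφ.2.1, fun σ => by rw [hφ.2.2]⟩

/-- The transposition of literals exchanging `v` and `v̄`, the symmetry that will fail to lift. -/
def Lit.flip (v : V) (l : Lit V) : Lit V := if l.var = v then l.negate else l

theorem Lit.var_flip (v : V) (l : Lit V) : (l.flip v).var = l.var := by
  unfold Lit.flip
  split_ifs
  · exact l.var_negate
  · rfl

theorem Lit.flip_negate (v : V) (l : Lit V) : l.negate.flip v = (l.flip v).negate := by
  simp only [Lit.flip, Lit.var_negate, apply_ite Lit.negate]

theorem Lit.flip_involutive (v : V) : Function.Involutive (Lit.flip v) := by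
  intro l
  by_cases h : l.var = v <;> simp [Lit.flip, Lit.var_negate, Lit.negate_negate, h]

theorem Lit.bijOn_flip_lits (F : CNF V) (v : V) :
    Set.BijOn (Lit.flip v) (F.lits : Set (Lit V)) (F.lits : Set (Lit V)) := by
  have maps_to : Set.MapsTo (Lit.flip v) (F.lits : Set (Lit V)) (F.lits : Set (Lit V)) :=
    fun l hl => CNF.mem_lits.2 (l.var_flip v ▸ CNF.mem_lits.1 hl)
  have inv_on : Set.InvOn (Lit.flip v) (Lit.flip v) (F.lits : Set (Lit V)) F.lits :=
    ⟨(Lit.flip_involutive v).leftInverse.leftInvOn _,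
      (Lit.flip_involutive v).rightInverse.rightInvOn _⟩
  exact inv_on.bijOn maps_to maps_to

theorem isSynSym_flip {F : CNF V} {v : V} (hF : F.map (Lit.flip v) = F) :
    IsSynSym F (Lit.flip v) :=
  ⟨Lit.bijOn_flip_lits F v, fun l _ => l.flip_negate v, hF⟩

theorem blocks_of_pure {F : CNF V} {l : Lit V} {C : Clause V} (hl : l ∈ C)
    (hpure : ∀ C' ∈ F, l.negate ∉ C') : Blocks F l C :=
  ⟨hl, fun C' hC' hl' => absurd hl' (hpure C' hC')⟩

theorem bceStep_insert_of_fresh {F : CNF V} {x : Lit V} {C : Clause V} (hx : x.var ∉ F.vars)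
    (hxC : x ∈ C) (hxC' : x.negate ∉ C) : BCEStep (insert C F) F := by
  have not_mem : C ∉ F := fun hC => hx (CNF.mem_vars.2 ⟨C, hC, x, hxC, rfl⟩)
  have hpure : ∀ C' ∈ insert C F, x.negate ∉ C' := by
    refine Finset.forall_mem_insert _ _ _ |>.2 ⟨hxC', fun C' hC' hx' => hx ?_⟩
    exact CNF.mem_vars.2 ⟨C', hC', x.negate, hx', x.var_negate⟩
  exact ⟨C, Finset.mem_insert_self C F, ⟨x, blocks_of_pure hxC hpure⟩,
    (Finset.erase_insert not_mem).symm⟩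

theorem not_isSemSym_insert_pair_extendId {F : CNF V} {φ : Lit V → Lit V} {x z : Lit V}
    {σ : V → Bool} (hx : x.var ∉ F.vars) (hz : z.var ∈ F.vars) (hσ : F.IsModel σ)
    (hσx : x.val σ = false) (hσz : z.val σ = true) (hσφz : (φ z).val σ = false) :
    ¬ IsSemSym (insert {x, z} F) (extendId F.lits φ) := by
  intro hsym
  have model : CNF.IsModel (insert {x, z} F) σ :=
    Finset.forall_mem_insert _ _ _ |>.2 ⟨⟨z, by simp, hσz⟩, hσ⟩
  have fix_x : extendId F.lits φ x = x := if_neg (mt CNF.mem_lits.1 hx)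
  have map_z : extendId F.lits φ z = φ z := if_pos (CNF.mem_lits.2 hz)
  obtain ⟨l, hl, hσl⟩ := hsym.isModel_map_iff.2 model _
    (Finset.mem_image_of_mem _ (Finset.mem_insert_self _ _))
  simp only [Finset.image_insert, Finset.image_singleton, fix_x, map_z, Finset.mem_insert,
    Finset.mem_singleton] at hl
  rcases hl with rfl | rfl <;> simp_all

/-- The formula `(ȳ ∨ z) ∧ (ȳ ∨ z̄) ∧ (y ∨ a) ∧ (y ∨ b) ∧ (ā ∨ b̄ ∨ c̄) ∧ (c ∨ ȳ)` that remains
after blocked clause elimination, with `y, z, a, b, c` encoded as `1, 2, 3, 4, 5`; the number `0`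
is left for the fresh variable `x`. -/
def unblockedCore : CNF ℕ :=
  {{.neg 1, .pos 2}, {.neg 1, .neg 2}, {.pos 1, .pos 3}, {.pos 1, .pos 4},
    {.neg 3, .neg 4, .neg 5}, {.pos 5, .neg 1}}

theorem unblockedCore_map_flip : unblockedCore.map (Lit.flip 2) = unblockedCore := by
  decide

instance (C : Clause V) : Decidable (IsTaut C) :=
  inferInstanceAs (Decidable (∃ l ∈ C, l.negate ∈ C))

set_option maxRecDepth 10000 in
theorem exists_resolvent_not_isTaut_unblockedCore :
    ∀ C ∈ unblockedCore, ∀ l ∈ C, ∃ C' ∈ unblockedCore,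
      l.negate ∈ C' ∧ ¬ IsTaut (C.erase l ∪ C'.erase l.negate) := by
  decide

theorem not_exists_blocks_unblockedCore :
    ¬ ∃ C ∈ unblockedCore, ∃ l : Lit ℕ, Blocks unblockedCore l C := by
  rintro ⟨C, hC, l, hl, hblocks⟩
  obtain ⟨C', hC', hl', hres⟩ := exists_resolvent_not_isTaut_unblockedCore C hC l hl
  exact hres (hblocks C' hC' hl')

theorem isModel_unblockedCore : unblockedCore.IsModel (· ∈ [2, 3, 4]) := by
  unfold CNF.IsModel
  decide

/-- Exhaustive blocked clause elimination is not
symmetry-lifting: there are CNF formulas `F, F'` such that `F'` is obtained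
from `F` by exhaustively removing blocked clauses, and some semantic symmetry
of `F'`, extended by the identity on `Lit(F) ∖ Lit(F')`, is not a semantic
symmetry of `F`. -/
theorem exhaustive_bce_not_symmetry_lifting :
    ∃ F F' : CNF ℕ,
      Relation.ReflTransGen BCEStep F F' ∧
      (¬ ∃ C ∈ F', ∃ l : Lit ℕ, Blocks F' l C) ∧
      ∃ φ : Lit ℕ → Lit ℕ, IsSemSym F' φ ∧
        ¬ IsSemSym F (extendId (CNF.lits F') φ) := by
  refine ⟨insert {.pos 0, .pos 2} unblockedCore, unblockedCore, .single ?_,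
    not_exists_blocks_unblockedCore, Lit.flip 2,
    (isSynSym_flip unblockedCore_map_flip).isSemSym, ?_⟩
  · exact bceStep_insert_of_fresh (x := .pos 0) (by decide) (by decide) (by decide)
  · exact not_isSemSym_insert_pair_extendId (by decide) (by decide) isModel_unblockedCore
      rfl rfl rfl
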